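/- For every integer d ≥ 2 and every balanced word w ∈ Σ^{2p}, the number of w-paths satisfies M_d(w) = Σ_{π∈ANC₂(w)} ∏_{V∈π} (d − 1_{V∈B(π)}), where 1_{V∈B(π)} is 1 if V is a bad block of π and 0 otherwise. -/

import Mathlib

/- Σ = {1,*} is encoded as `Bool`: `true` is the letter `1`, `false` is the letter `*`. -/

/-- The generator `g_i^{w}` in the free group `F_d`. -/
def gens (d : ℕ) (b : Bool) (i : Fin d) : FreeGroup (Fin d) :=
  if b then FreeGroup.of i else (FreeGroup.of i)⁻¹

/-- The product `g_{i_1}^{w_1} ⋯ g_{i_k}^{w_k}` in the free group `F_d`. -/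
def wprod {d k : ℕ} (w : Fin k → Bool) (i : Fin k → Fin d) : FreeGroup (Fin d) :=
  (List.ofFn fun t => gens d (w t) (i t)).prod

/-- The partial product `v_m := g_{i_1}^{w_1} ⋯ g_{i_m}^{w_m}`. -/
def pProd {d k : ℕ} (w : Fin k → Bool) (i : Fin k → Fin d) (m : ℕ) : FreeGroup (Fin d) :=
  ((List.ofFn fun t => gens d (w t) (i t)).take m).prod

open Classical in
/-- The return set of the (0-based) step `j`: all steps `l ≥ j` with `v_{l+1} = v_j`;
its minimum is the first return time `r(j)`. -/
noncomputable def retSet {d k : ℕ} (w : Fin k → Bool) (i : Fin k → Fin d) (j : Fin k) :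
    Finset (Fin k) :=
  Finset.univ.filter fun l => j ≤ l ∧ pProd w i (l.val + 1) = pProd w i j.val

/-- The skeleton of the path: the collection of blocks `{j, r(j)}` for those `j` whose
first return time `r(j)` is defined. -/
def skel {d k : ℕ} (w : Fin k → Bool) (i : Fin k → Fin d) : Set (Finset (Fin k)) :=
  {S | ∃ j l : Fin k, (retSet w i j).min = (l : WithBot (Fin k)) ∧ S = {j, l}}

/-- `w` is balanced: even length, concatenation of blocks `1*` or `*1`. -/
def IsBalanced {k : ℕ} (w : Fin k → Bool) : Prop :=
  k % 2 = 0 ∧ ∀ i : Fin k, i.val % 2 = 0 → ∀ h : i.val + 1 < k, w i ≠ w ⟨i.val + 1, h⟩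

/-- `π` is a partition of `[k]`: no empty block and every element lies in exactly one
block. -/
def IsPartitionF {k : ℕ} (π : Finset (Finset (Fin k))) : Prop :=
  (∅ ∉ π) ∧ ∀ t : Fin k, ∃! S, S ∈ π ∧ t ∈ S

/-- `a` and `b` lie in a common block of `π`. -/
def SameBlockF {k : ℕ} (π : Finset (Finset (Fin k))) (a b : Fin k) : Prop :=
  ∃ S ∈ π, a ∈ S ∧ b ∈ S

/-- `π` is non-crossing. -/
def NonCrossingF {k : ℕ} (π : Finset (Finset (Fin k))) : Prop :=
  ∀ i₁ i₂ j₁ j₂ : Fin k, i₁ < i₂ → i₂ < j₁ → j₁ < j₂ →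
    SameBlockF π i₁ j₁ → SameBlockF π i₂ j₂ → SameBlockF π i₁ i₂

/-- A list of letters is alternating: even length, equal to `1*1*⋯1*` or `*1*1⋯*1`. -/
def IsAltList (u : List Bool) : Prop :=
  u.length % 2 = 0 ∧
    ((∀ m (h : m < u.length), u.get ⟨m, h⟩ = decide (m % 2 = 0)) ∨
     (∀ m (h : m < u.length), u.get ⟨m, h⟩ = decide (m % 2 = 1)))

/-- Every block of `π`, read in increasing order, induces an alternating subword of `w`. -/
def AltBlocks {k : ℕ} (w : Fin k → Bool) (π : Finset (Finset (Fin k))) : Prop :=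
  ∀ S ∈ π, IsAltList ((S.sort (· ≤ ·)).map w)

/-- `π ∈ ANC₂(w)`: an alternating non-crossing partition of `w` all of whose blocks are
pairs. -/
def MemANC2 {k : ℕ} (w : Fin k → Bool) (π : Finset (Finset (Fin k))) : Prop :=
  IsPartitionF π ∧ NonCrossingF π ∧ AltBlocks w π ∧ ∀ S ∈ π, S.card = 2

/-- `j ⊸_π j'` (a bad pair): there are blocks `{j < k₀} ∈ π` and `{j' < k'} ∈ π` with
`j < j' < k' < k₀`, no block `{j'' < k''} ∈ π` with `j < j'' < j' < k' < k'' < k₀`, and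
`w_{j'} ≠ w_j`. -/
def BadPair {k : ℕ} (w : Fin k → Bool) (π : Finset (Finset (Fin k))) (j j' : Fin k) :
    Prop :=
  ∃ k₀ k' : Fin k,
    ({j, k₀} : Finset (Fin k)) ∈ π ∧ ({j', k'} : Finset (Fin k)) ∈ π ∧
    j < j' ∧ j' < k' ∧ k' < k₀ ∧
    (¬ ∃ j'' k'' : Fin k, ({j'', k''} : Finset (Fin k)) ∈ π ∧
      j < j'' ∧ j'' < j' ∧ k' < k'' ∧ k'' < k₀) ∧
    w j' ≠ w j

/-- A bad block `U = {j' < k'} ∈ π`: `j ⊸_π j'` for some `j`, where `j'` is the smaller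
element of `U`. -/
def BadBlock {k : ℕ} (w : Fin k → Bool) (π : Finset (Finset (Fin k)))
    (U : Finset (Fin k)) : Prop :=
  U ∈ π ∧ ∃ j j' : Fin k, BadPair w π j j' ∧ j' ∈ U ∧ ∀ x ∈ U, j' ≤ x

/-- `Mword d w` is the number of `w`-paths. -/
noncomputable def Mword (d : ℕ) {k : ℕ} (w : Fin k → Bool) : ℕ :=
  Nat.card {i : Fin k → Fin d // wprod w i = 1}

open Classical in
/-- The set `ANC₂(w)` of alternating non-crossing pair partitions of `w`. -/
noncomputable def ANC2 {k : ℕ} (w : Fin k → Bool) : Finset (Finset (Finset (Fin k))) :=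
  Finset.univ.filter (MemANC2 w)

/-!
Reduce the word `g_{i_1}^{w_1} ⋯ g_{i_k}^{w_k}` from left to right, keeping the letters that have
not been cancelled on a stack: a letter removes the top of the stack if it is its inverse, and is
put on the stack otherwise. The word is trivial exactly when the stack ends up empty, and then the
pairs of letters cancelling each other form a partition `π ∈ ANC₂(w)`.

Conversely, `π ∈ ANC₂(w)` is the pairing produced by the labels `i` as soon as it obeys the same
greedy rule. At the larger element of a block, the rule says that the two labels of the block
agree. At the smaller element `t` of a block, the top `j` of the stack is the smaller element of
the innermost block around `t`, and the rule says that the letters at `j` and `t` are not inverse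
to each other, which restricts the labels only if `w_t ≠ w_j`, that is, if `(j, t)` is a bad pair.
Choosing the labels from left to right, there is hence one choice at the larger element of a block,
and at the smaller one there are `d - 1` or `d` choices according to whether the block is bad.
-/

section Matching

variable {ι : Type*} {R R' C : ι → ι → Prop}

/-- Read `R a b` as "`b` closes `a`". The pending elements of `s` are those which close nothing
and are not closed within `s`. -/
def Pending (R : ι → ι → Prop) (s : Set ι) : Set ι :=
  {a | a ∈ s ∧ (∀ c, ¬ R c a) ∧ ∀ b ∈ s, ¬ R a b}

lemma pending_insert_of_rel {s : Set ι} {c t : ι} (hct : R c t) (huniq : ∀ a, R a t → a = c) :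
    Pending R (insert t s) = Pending R s \ {c} := by
  ext a
  simp only [Pending, Set.mem_insert_iff, Set.mem_sdiff, Set.mem_ofPred_eq, Set.mem_singleton_iff,
    forall_eq_or_imp]
  grind

lemma pending_insert_of_forall_not_rel {s : Set ι} {t : ι} (ht : ∀ a, ¬ R a t)
    (hs : ∀ b ∈ s, ¬ R t b) : Pending R (insert t s) = insert t (Pending R s) := by
  ext a
  simp only [Pending, Set.mem_insert_iff, Set.mem_ofPred_eq, forall_eq_or_imp]
  grind

/-- Every element closes another one or is closed by another one. -/
def CoversAll (R : ι → ι → Prop) : Prop := ∀ t, (∃ a, R a t) ∨ ∃ b, R t b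

lemma pending_univ_eq_empty_iff : Pending R Set.univ = ∅ ↔ CoversAll R := by
  simp only [Set.eq_empty_iff_forall_notMem, Pending, Set.mem_ofPred_eq, Set.mem_univ,
    forall_const, true_and, not_and_or, not_forall, not_not, CoversAll]

variable [LinearOrder ι]

/-- Last in, first out: only the greatest pending element may be closed. These relations are the
non-crossing partial matchings of `ι` in which no matched pair encloses an unmatched element. -/
def IsLIFO (R : ι → ι → Prop) : Prop :=
  ∀ ⦃a t⦄, R a t → IsGreatest (Pending R (Set.Iio t)) a

/-- Each `t` closes the greatest pending element `a` exactly when `C a t` holds. -/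
def IsGreedy (C R : ι → ι → Prop) : Prop :=
  ∀ a t, R a t ↔ IsGreatest (Pending R (Set.Iio t)) a ∧ C a t

namespace IsLIFO

variable {a a' b b' c e : ι}

lemma lt (h : IsLIFO R) (hab : R a b) : a < b := (h hab).1.1

lemma left_unique (h : IsLIFO R) (hab : R a b) (hab' : R a' b) : a = a' :=
  (h hab).unique (h hab')

lemma not_rel_left (h : IsLIFO R) (hab : R a b) : ¬ R c a := (h hab).1.2.1 c

lemma right_unique (h : IsLIFO R) (hab : R a b) (hab' : R a b') : b = b' := by
  rcases lt_trichotomy b b' with hlt | rfl | hlt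
  · exact absurd hab ((h hab').1.2.2 b hlt)
  · rfl
  · exact absurd hab' ((h hab).1.2.2 b' hlt)

lemma right_lt_right (h : IsLIFO R) (hab : R a b) (hce : R c e) (hac : a < c) (hcb : c < b) :
    e < b := by
  rcases lt_trichotomy e b with heb | rfl | hbe
  · exact heb
  · exact absurd (h.left_unique hab hce) hac.ne
  · obtain ⟨-, hc, hc'⟩ := (h hce).1
    exact absurd ((h hab).2 ⟨hcb, hc, fun x hx => hc' x (lt_trans hx hbe)⟩) hac.not_ge

end IsLIFO

namespace IsGreedy

lemma isLIFO (h : IsGreedy C R) : IsLIFO R := fun a t hat => ((h a t).1 hat).1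

lemma unique [WellFoundedLT ι] (h : IsGreedy C R) (h' : IsGreedy C R') : R = R' := by
  suffices ∀ t a, R a t ↔ R' a t from funext₂ fun a t => propext (this t a)
  intro t
  induction t using WellFoundedLT.induction with
  | ind t ih =>
    have hpending : Pending R (Set.Iio t) = Pending R' (Set.Iio t) := by
      ext a
      refine and_congr_right fun hat => and_congr (forall_congr' fun c => ?_)
        (forall₂_congr fun b hb => ?_)
      · rw [ih a hat]
      · rw [ih b hb]
    intro a
    rw [h a t, h' a t, hpending]

end IsGreedy

end Matching

section Stack

variable {α : Type*} {k : ℕ} {x : Fin k → α × Bool}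

/-- Two letters of a word in a free group cancel when they are adjacent. -/
def Cancels (p q : α × Bool) : Prop := p.1 = q.1 ∧ p.2 ≠ q.2

lemma mk_mul_mk_of_cancels {p q : α × Bool} (h : Cancels p q) :
    FreeGroup.mk [p] * FreeGroup.mk [q] = 1 := by
  obtain ⟨y, b⟩ := p
  obtain ⟨z, c⟩ := q
  obtain ⟨rfl, hne⟩ := h
  obtain rfl : b = !c := Bool.eq_not.2 hne
  exact Quot.sound (FreeGroup.Red.Step.not_rev (L₁ := []) (L₂ := []))

open Classical in
/-- The effect of reading the letter at position `t`: it removes the top of the stack if it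
cancels the letter there, and is put on top otherwise. -/
noncomputable def stackStep (x : Fin k → α × Bool) (t : Fin k) : List (Fin k) → List (Fin k)
  | [] => [t]
  | a :: s => if Cancels (x a) (x t) then s else t :: a :: s

/-- The positions, latest first, of the letters of the reduced form of the first `t` letters
of `x`, when `x` is reduced from left to right. -/
noncomputable def reductionStack (x : Fin k → α × Bool) : Fin (k + 1) → List (Fin k) :=
  Fin.induction [] (stackStep x)

/-- In the reduction of `x` from left to right, the letter at `t` cancels the one at `a`. -/
def Closes (x : Fin k → α × Bool) (a t : Fin k) : Prop :=
  ∃ s, reductionStack x t.castSucc = a :: s ∧ Cancels (x a) (x t)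

@[simp]
lemma reductionStack_zero : reductionStack x 0 = [] := rfl

lemma reductionStack_succ (t : Fin k) :
    reductionStack x t.succ = stackStep x t (reductionStack x t.castSucc) :=
  Fin.induction_succ _ _ _

lemma reductionStack_pop_or_push (x : Fin k → α × Bool) (t : Fin k) :
    (∃ a s, reductionStack x t.castSucc = a :: s ∧ Cancels (x a) (x t) ∧
      reductionStack x t.succ = s) ∨
    (∀ a, ¬ Closes x a t) ∧ reductionStack x t.succ = t :: reductionStack x t.castSucc := by
  rw [reductionStack_succ]
  unfold Closes
  rcases reductionStack x t.castSucc with _ | ⟨a, s⟩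
  · simp [stackStep]
  · by_cases hc : Cancels (x a) (x t) <;> simp [stackStep, hc]

lemma castSucc_lt_of_mem_reductionStack (t : Fin (k + 1)) :
    ∀ a ∈ reductionStack x t, a.castSucc < t := by
  induction t using Fin.induction with
  | zero => simp
  | succ t ih =>
    rcases reductionStack_pop_or_push x t with ⟨c, s, hs, -, hsucc⟩ | ⟨-, hsucc⟩ <;>
      grind [Fin.castSucc_lt_succ]

lemma reductionStack_pairwise_gt (t : Fin (k + 1)) : (reductionStack x t).Pairwise (· > ·) := by
  induction t using Fin.induction with
  | zero => simp
  | succ t ih =>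
    rcases reductionStack_pop_or_push x t with ⟨c, s, hs, -, hsucc⟩ | ⟨-, hsucc⟩
    · rw [hs] at ih
      rw [hsucc]
      exact ih.of_cons
    · rw [hsucc]
      exact List.pairwise_cons.2 ⟨fun a ha => Fin.castSucc_lt_castSucc_iff.1
        (castSucc_lt_of_mem_reductionStack _ a ha), ih⟩

lemma Closes.lt {a t : Fin k} (h : Closes x a t) : a < t := by
  obtain ⟨s, hs, -⟩ := h
  exact Fin.castSucc_lt_castSucc_iff.1
    (castSucc_lt_of_mem_reductionStack t.castSucc a (hs ▸ List.mem_cons_self))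

lemma Closes.left_unique {a a' t : Fin k} (h : Closes x a t) (h' : Closes x a' t) : a = a' := by
  obtain ⟨s, hs, -⟩ := h
  obtain ⟨s', hs', -⟩ := h'
  exact (List.cons.inj (hs.symm.trans hs')).1

lemma mem_reductionStack {t : Fin (k + 1)} {a : Fin k} :
    a ∈ reductionStack x t ↔ a ∈ Pending (Closes x) {b | b.castSucc < t} := by
  induction t using Fin.induction generalizing a with
  | zero => simp [Pending]
  | succ t ih =>
    have hinsert : {b : Fin k | b.castSucc < t.succ} = insert t {b | b.castSucc < t.castSucc} := by
      ext b
      simp [le_iff_eq_or_lt]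
    rw [hinsert]
    rcases reductionStack_pop_or_push x t with ⟨c, s, hs, hcancel, hsucc⟩ | ⟨hnot, hsucc⟩
    · have hct : Closes x c t := ⟨s, hs, hcancel⟩
      have hc : c ∉ s := by
        have hpairwise := reductionStack_pairwise_gt (x := x) t.castSucc
        rw [hs, List.pairwise_cons] at hpairwise
        exact fun hmem => lt_irrefl c (hpairwise.1 c hmem)
      rw [pending_insert_of_rel hct fun b hb => hb.left_unique hct, Set.mem_sdiff, ← ih, hs, hsucc]
      grind
    · have hlate : ∀ b ∈ {b : Fin k | b.castSucc < t.castSucc}, ¬ Closes x t b :=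
        fun b hb htb => htb.lt.not_gt hb
      rw [pending_insert_of_forall_not_rel hnot hlate, Set.mem_insert_iff, ← ih, hsucc,
        List.mem_cons]

lemma mem_reductionStack_castSucc {a t : Fin k} :
    a ∈ reductionStack x t.castSucc ↔ a ∈ Pending (Closes x) (Set.Iio t) :=
  mem_reductionStack

lemma isGreatest_of_reductionStack_eq_cons {a t : Fin k} {s : List (Fin k)}
    (hs : reductionStack x t.castSucc = a :: s) :
    IsGreatest (Pending (Closes x) (Set.Iio t)) a := by
  have hpairwise := reductionStack_pairwise_gt (x := x) t.castSucc
  rw [hs, List.pairwise_cons] at hpairwise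
  refine ⟨mem_reductionStack_castSucc.1 (by simp [hs]), fun b hb => ?_⟩
  rw [← mem_reductionStack_castSucc, hs, List.mem_cons] at hb
  exact hb.elim Eq.le fun hb => (hpairwise.1 b hb).le

lemma isGreedy_closes (x : Fin k → α × Bool) :
    IsGreedy (fun a t => Cancels (x a) (x t)) (Closes x) := by
  refine fun a t => ⟨fun ⟨s, hs, hc⟩ => ⟨isGreatest_of_reductionStack_eq_cons hs, hc⟩,
    fun ⟨ha, hc⟩ => ?_⟩
  obtain ⟨c, s, hs⟩ := List.exists_cons_of_ne_nil
    (List.ne_nil_of_mem (mem_reductionStack_castSucc.2 ha.1))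
  obtain rfl := ha.unique (isGreatest_of_reductionStack_eq_cons hs)
  exact ⟨s, hs, hc⟩

lemma isReduced_reductionStack (t : Fin (k + 1)) :
    FreeGroup.IsReduced ((reductionStack x t).map x) := by
  induction t using Fin.induction with
  | zero => exact FreeGroup.IsReduced.nil
  | succ t ih =>
    rcases reductionStack_pop_or_push x t with ⟨c, s, hs, -, hsucc⟩ | ⟨hnot, hsucc⟩
    · rw [hs] at ih
      rw [hsucc]
      exact ih.infix (List.suffix_cons (x c) (s.map x)).isInfix
    · rw [hsucc]
      rcases hs : reductionStack x t.castSucc with _ | ⟨c, s⟩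
      · exact FreeGroup.IsReduced.singleton
      · rw [hs] at ih
        refine FreeGroup.isReduced_cons_cons.2 ⟨fun heq => ?_, ih⟩
        by_contra hne
        exact hnot c ⟨s, hs, heq.symm, Ne.symm hne⟩

lemma mk_take_eq_mk_reductionStack (t : Fin (k + 1)) :
    FreeGroup.mk ((List.ofFn x).take t) =
      FreeGroup.mk ((reductionStack x t).reverse.map x) := by
  induction t using Fin.induction with
  | zero => simp
  | succ t ih =>
    have htake : (List.ofFn x).take t.succ = (List.ofFn x).take t.castSucc ++ [x t] := by
      simp [List.take_add_one]
    rw [htake, ← FreeGroup.mul_mk, ih]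
    rcases reductionStack_pop_or_push x t with ⟨c, s, hs, hcancel, hsucc⟩ | ⟨-, hsucc⟩
    · rw [hs, hsucc, List.reverse_cons, List.map_append, ← FreeGroup.mul_mk, mul_assoc,
        List.map_singleton, mk_mul_mk_of_cancels hcancel, mul_one]
    · rw [hsucc, List.reverse_cons, List.map_append, ← FreeGroup.mul_mk, List.map_singleton]

lemma mk_ofFn_eq_one_iff_reductionStack_eq_nil :
    FreeGroup.mk (List.ofFn x) = 1 ↔ reductionStack x (Fin.last k) = [] := by
  classical
  have hprod : FreeGroup.mk (List.ofFn x) =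
      FreeGroup.mk ((reductionStack x (Fin.last k)).reverse.map x) := by
    rw [← mk_take_eq_mk_reductionStack, List.take_of_length_le (by simp)]
  have hreduced : FreeGroup.IsReduced ((reductionStack x (Fin.last k)).reverse.map x) := by
    rw [List.map_reverse, FreeGroup.IsReduced, List.isChain_reverse]
    exact (isReduced_reductionStack _).imp fun p q h heq => (h heq.symm).symm
  rw [hprod, ← FreeGroup.toWord_eq_nil_iff, FreeGroup.toWord_mk, hreduced.reduce_eq]
  simp

lemma mk_ofFn_eq_one_iff_coversAll : FreeGroup.mk (List.ofFn x) = 1 ↔ CoversAll (Closes x) := by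
  simp only [mk_ofFn_eq_one_iff_reductionStack_eq_nil, List.eq_nil_iff_forall_not_mem,
    mem_reductionStack, Fin.castSucc_lt_last, Set.ofPred_true, ← Set.eq_empty_iff_forall_notMem,
    pending_univ_eq_empty_iff]

end Stack

section Pairing

variable {k : ℕ} {w : Fin k → Bool} {π : Finset (Finset (Fin k))}
  {R : Fin k → Fin k → Prop} {a b c e : Fin k}

/-- `{a < b}` is a block of `π`. -/
def IsArc (π : Finset (Finset (Fin k))) (a b : Fin k) : Prop := a < b ∧ {a, b} ∈ π

open Classical in
/-- The family of all pairs `{a, b}` of related elements, inverse to `IsArc`. -/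
noncomputable def relBlocks (R : Fin k → Fin k → Prop) : Finset (Finset (Fin k)) :=
  {S | ∃ a b, R a b ∧ S = {a, b}}

lemma mem_relBlocks {S : Finset (Fin k)} : S ∈ relBlocks R ↔ ∃ a b, R a b ∧ S = {a, b} := by
  simp [relBlocks]

lemma pair_eq_pair_iff_of_lt {ι : Type*} [LinearOrder ι] {a b c e : ι} (hab : a < b)
    (hce : c < e) : ({a, b} : Finset ι) = {c, e} ↔ a = c ∧ b = e := by
  rw [← Finset.coe_inj, Finset.coe_pair, Finset.coe_pair, Set.pair_eq_pair_iff]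
  grind

lemma isArc_relBlocks (hR : ∀ a b, R a b → a < b) : IsArc (relBlocks R) = R := by
  ext a b
  refine ⟨fun ⟨hab, hmem⟩ => ?_, fun h => ⟨hR a b h, mem_relBlocks.2 ⟨a, b, h, rfl⟩⟩⟩
  obtain ⟨c, e, hce, heq⟩ := mem_relBlocks.1 hmem
  obtain ⟨rfl, rfl⟩ := (pair_eq_pair_iff_of_lt hab (hR c e hce)).1 heq
  exact hce

lemma isAltList_pair_iff {p q : Bool} : IsAltList [p, q] ↔ p ≠ q := by
  unfold IsAltList
  revert p q
  decide

lemma isAltList_map_sort_pair_iff (hab : a < b) :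
    IsAltList ((({a, b} : Finset (Fin k)).sort (· ≤ ·)).map w) ↔ w a ≠ w b := by
  have hsort : ({a, b} : Finset (Fin k)).sort (· ≤ ·) = [a, b] := by
    rw [Finset.sort_insert (· ≤ ·) (by simpa using hab.le) (by simpa using hab.ne),
      Finset.sort_singleton]
  rw [hsort]
  exact isAltList_pair_iff

lemma IsLIFO.eq_of_not_disjoint (h : IsLIFO R) (hab : R a b) (hce : R c e) {t : Fin k}
    (ht : t ∈ ({a, b} : Finset (Fin k))) (ht' : t ∈ ({c, e} : Finset (Fin k))) :
    a = c ∧ b = e := by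
  rw [Finset.mem_insert, Finset.mem_singleton] at ht ht'
  rcases ht with rfl | rfl <;> rcases ht' with rfl | rfl
  · exact ⟨rfl, h.right_unique hab hce⟩
  · exact (h.not_rel_left hab hce).elim
  · exact (h.not_rel_left hce hab).elim
  · exact ⟨h.left_unique hab hce, rfl⟩

lemma IsLIFO.isPartitionF_relBlocks (h : IsLIFO R) (hcov : CoversAll R) :
    IsPartitionF (relBlocks R) := by
  refine ⟨fun hempty => ?_, fun t => ?_⟩
  · obtain ⟨a, b, -, heq⟩ := mem_relBlocks.1 hempty
    exact Finset.insert_ne_empty a {b} heq.symm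
  · obtain ⟨a, b, hab, ht⟩ : ∃ a b, R a b ∧ t ∈ ({a, b} : Finset (Fin k)) := by
      rcases hcov t with ⟨a, hat⟩ | ⟨b, htb⟩
      exacts [⟨a, t, hat, by simp⟩, ⟨t, b, htb, by simp⟩]
    refine ⟨{a, b}, ⟨mem_relBlocks.2 ⟨a, b, hab, rfl⟩, ht⟩, ?_⟩
    rintro S ⟨hS, htS⟩
    obtain ⟨c, e, hce, rfl⟩ := mem_relBlocks.1 hS
    obtain ⟨rfl, rfl⟩ := h.eq_of_not_disjoint hab hce ht htS
    rfl

lemma IsLIFO.sameBlockF_relBlocks_iff (h : IsLIFO R) (hab : a < b) :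
    SameBlockF (relBlocks R) a b ↔ R a b := by
  refine ⟨?_, fun hR => ⟨{a, b}, mem_relBlocks.2 ⟨a, b, hR, rfl⟩, by simp, by simp⟩⟩
  rintro ⟨S, hS, ha, hb⟩
  obtain ⟨c, e, hce, rfl⟩ := mem_relBlocks.1 hS
  have hlt := h.lt hce
  grind

lemma IsLIFO.nonCrossingF_relBlocks (h : IsLIFO R) : NonCrossingF (relBlocks R) := by
  intro a c b e hac hcb hbe hab hce
  rw [h.sameBlockF_relBlocks_iff (hac.trans hcb)] at hab
  rw [h.sameBlockF_relBlocks_iff (hcb.trans hbe)] at hce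
  exact absurd (h.right_lt_right hab hce hac hcb) hbe.not_gt

lemma IsLIFO.memANC2_relBlocks (h : IsLIFO R) (hcov : CoversAll R)
    (hw : ∀ a b, R a b → w a ≠ w b) : MemANC2 w (relBlocks R) := by
  refine ⟨h.isPartitionF_relBlocks hcov, h.nonCrossingF_relBlocks, fun S hS => ?_,
    fun S hS => ?_⟩ <;> obtain ⟨a, b, hab, rfl⟩ := mem_relBlocks.1 hS
  · exact (isAltList_map_sort_pair_iff (h.lt hab)).2 (hw a b hab)
  · exact Finset.card_pair (h.lt hab).ne

lemma BadPair.lt {j t : Fin k} (h : BadPair w π j t) : j < t := by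
  obtain ⟨_, _, _, _, hjt, _⟩ := h
  exact hjt

namespace MemANC2

lemma exists_isArc_of_mem (h : MemANC2 w π) {S : Finset (Fin k)} (hS : S ∈ π) :
    ∃ a b, IsArc π a b ∧ S = {a, b} := by
  obtain ⟨a, b, hab, rfl⟩ := Finset.card_eq_two.1 (h.2.2.2 S hS)
  rcases hab.lt_or_gt with hlt | hlt
  · exact ⟨a, b, ⟨hlt, hS⟩, rfl⟩
  · exact ⟨b, a, ⟨hlt, Finset.pair_comm a b ▸ hS⟩, Finset.pair_comm a b⟩

lemma relBlocks_isArc (h : MemANC2 w π) : relBlocks (IsArc π) = π := by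
  ext S
  rw [mem_relBlocks]
  refine ⟨?_, h.exists_isArc_of_mem⟩
  rintro ⟨a, b, hab, rfl⟩
  exact hab.2

lemma coversAll_isArc (h : MemANC2 w π) : CoversAll (IsArc π) := by
  intro t
  obtain ⟨S, ⟨hS, ht⟩, -⟩ := h.1.2 t
  obtain ⟨a, b, hab, rfl⟩ := h.exists_isArc_of_mem hS
  rw [Finset.mem_insert, Finset.mem_singleton] at ht
  rcases ht with rfl | rfl
  exacts [Or.inr ⟨b, hab⟩, Or.inl ⟨a, hab⟩]

lemma ne_of_isArc (h : MemANC2 w π) (hab : IsArc π a b) : w a ≠ w b :=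
  (isAltList_map_sort_pair_iff hab.1).1 (h.2.2.1 _ hab.2)

lemma eq_of_isArc_of_not_disjoint (h : MemANC2 w π) (hab : IsArc π a b) (hce : IsArc π c e)
    {t : Fin k} (ht : t ∈ ({a, b} : Finset (Fin k))) (ht' : t ∈ ({c, e} : Finset (Fin k))) :
    a = c ∧ b = e :=
  (pair_eq_pair_iff_of_lt hab.1 hce.1).1 ((h.1.2 t).unique ⟨hab.2, ht⟩ ⟨hce.2, ht'⟩)

lemma not_crossing (h : MemANC2 w π) (hab : IsArc π a b) (hce : IsArc π c e) (hac : a < c)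
    (hcb : c < b) : ¬ b < e := by
  intro hbe
  obtain ⟨S, hS, haS, hcS⟩ := h.2.1 a c b e hac hcb hbe
    ⟨_, hab.2, by simp, by simp⟩ ⟨_, hce.2, by simp, by simp⟩
  obtain rfl := (h.1.2 a).unique ⟨hS, haS⟩ ⟨hab.2, by simp⟩
  exact hac.ne (h.eq_of_isArc_of_not_disjoint hab hce hcS (by simp)).1

lemma isLIFO_isArc (h : MemANC2 w π) : IsLIFO (IsArc π) := by
  intro a t hat
  refine ⟨⟨hat.1, fun c hca => ?_, fun b hbt hab => ?_⟩, fun c ⟨hct, hc, hc'⟩ => ?_⟩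
  · exact hca.1.ne (h.eq_of_isArc_of_not_disjoint hca hat (t := a) (by simp) (by simp)).1
  · exact (ne_of_lt hbt) (h.eq_of_isArc_of_not_disjoint hab hat (t := a) (by simp) (by simp)).2
  · by_contra! hac
    obtain ⟨e, hce⟩ := (h.coversAll_isArc c).resolve_left fun ⟨x, hx⟩ => hc x hx
    rcases lt_trichotomy e t with het | rfl | hte
    · exact hc' e het hce
    · exact hac.ne (h.eq_of_isArc_of_not_disjoint hat hce (t := e) (by simp) (by simp)).1
    · exact h.not_crossing hat hce hac hct hte

lemma mem_pending_Iio_iff (h : MemANC2 w π) {t : Fin k} :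
    a ∈ Pending (IsArc π) (Set.Iio t) ↔ a < t ∧ ∃ b, IsArc π a b ∧ t ≤ b := by
  refine and_congr_right fun _ => ⟨fun ⟨hleft, hright⟩ => ?_, fun ⟨b, hab, htb⟩ => ?_⟩
  · obtain ⟨b, hab⟩ := (h.coversAll_isArc a).resolve_left fun ⟨x, hx⟩ => hleft x hx
    exact ⟨b, hab, not_lt.1 fun hbt => hright b hbt hab⟩
  · refine ⟨fun c => h.isLIFO_isArc.not_rel_left hab, fun e het hae => ?_⟩
    exact (h.isLIFO_isArc.right_unique hab hae ▸ htb).not_gt het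

lemma badPair_iff (h : MemANC2 w π) {j t : Fin k} :
    BadPair w π j t ↔
      (∃ b, IsArc π t b) ∧ IsGreatest (Pending (IsArc π) (Set.Iio t)) j ∧ w t ≠ w j := by
  have hlifo := h.isLIFO_isArc
  constructor
  · rintro ⟨k₀, k', hj, ht, hjt, htk', hk'k₀, hbetween, hne⟩
    have hjk₀ : IsArc π j k₀ := ⟨hjt.trans (htk'.trans hk'k₀), hj⟩
    have htk'_arc : IsArc π t k' := ⟨htk', ht⟩
    refine ⟨⟨k', htk'_arc⟩, ⟨h.mem_pending_Iio_iff.2 ⟨hjt, k₀, hjk₀, (htk'.trans hk'k₀).le⟩,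
      fun c hc => not_lt.1 fun hjc => hbetween ?_⟩, hne⟩
    obtain ⟨hct, e, hce, hte⟩ := h.mem_pending_Iio_iff.1 hc
    have hte : t < e := hte.lt_of_ne fun hte => hlifo.not_rel_left htk'_arc (hte ▸ hce)
    exact ⟨c, e, hce.2, hjc, hct, hlifo.right_lt_right hce htk'_arc hct hte,
      hlifo.right_lt_right hjk₀ hce hjc (hct.trans (htk'.trans hk'k₀))⟩
  · rintro ⟨⟨k', ht⟩, ⟨hmem, hmax⟩, hne⟩
    obtain ⟨hjt, k₀, hj, htk₀⟩ := h.mem_pending_Iio_iff.1 hmem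
    have htk₀ : t < k₀ := htk₀.lt_of_ne fun htk₀ => hlifo.not_rel_left ht (htk₀ ▸ hj)
    refine ⟨k₀, k', hj.2, ht.2, hjt, ht.1, hlifo.right_lt_right hj ht hjt htk₀, ?_, hne⟩
    rintro ⟨c, e, hce, hjc, hct, hk'e, -⟩
    have hte : t < e := ht.1.trans hk'e
    exact (hmax (h.mem_pending_Iio_iff.2 ⟨hct, e, ⟨hct.trans hte, hce⟩, hte.le⟩)).not_gt hjc

end MemANC2

lemma IsPartitionF.prod_univ {M : Type*} [CommMonoid M] (h : IsPartitionF π) (f : Fin k → M) :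
    ∏ t, f t = ∏ S ∈ π, ∏ t ∈ S, f t := by
  have hdisj : (π : Set (Finset (Fin k))).PairwiseDisjoint id := fun S hS T hT hne =>
    Finset.disjoint_left.2 fun t htS htT => hne ((h.2 t).unique ⟨hS, htS⟩ ⟨hT, htT⟩)
  have huniv : π.biUnion id = Finset.univ := Finset.eq_univ_iff_forall.2 fun t => by
    obtain ⟨S, hS, -⟩ := h.2 t
    exact Finset.mem_biUnion.2 ⟨S, hS⟩
  rw [← huniv, Finset.prod_biUnion hdisj]
  rfl

lemma badBlock_pair_iff (hab : IsArc π a b) :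
    BadBlock w π {a, b} ↔ ∃ j, BadPair w π j a := by
  constructor
  · rintro ⟨-, j, t, hj, ht, hmin⟩
    have hta : t ≤ a := hmin a (by simp)
    have hab' : a < b := hab.1
    obtain rfl : t = a := by grind
    exact ⟨j, hj⟩
  · rintro ⟨j, hj⟩
    exact ⟨hab.2, j, a, hj, by simp, by simp [hab.1.le]⟩

end Pairing

section Admissible

variable {α : Type*} {k : ℕ} {w : Fin k → Bool} {π : Finset (Finset (Fin k))} {i : Fin k → α}

/-- The word in the letters `g_y` and `g_y⁻¹` with labels `i` and exponents `w`, in the encoding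
of `FreeGroup`. -/
def letter (w : Fin k → Bool) (i : Fin k → α) (t : Fin k) : α × Bool := (i t, w t)

lemma wprod_eq_mk {d : ℕ} (i : Fin k → Fin d) :
    wprod w i = FreeGroup.mk (List.ofFn (letter w i)) := by
  have hlift : FreeGroup.lift FreeGroup.of (FreeGroup.mk (List.ofFn (letter w i))) =
      FreeGroup.mk (List.ofFn (letter w i)) := by
    rw [FreeGroup.lift_of_eq_id, MonoidHom.id_apply]
  rw [← hlift, FreeGroup.lift_mk, List.map_ofFn]
  simp only [wprod, gens, letter, Function.comp_def, Bool.cond_eq_ite]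
  rfl

/-- The labels `i` are constant on the blocks of `π` and distinct on its bad pairs. These are
the label sequences whose left-to-right reduction pairs the letters according to `π`. -/
def IsAdmissible (w : Fin k → Bool) (π : Finset (Finset (Fin k))) (i : Fin k → α) : Prop :=
  (∀ a b, IsArc π a b → i a = i b) ∧ ∀ j t, BadPair w π j t → i j ≠ i t

lemma MemANC2.isGreedy_isArc_iff (h : MemANC2 w π) :
    IsGreedy (fun a t => Cancels (letter w i a) (letter w i t)) (IsArc π) ↔
      IsAdmissible w π i := by
  have hlifo := h.isLIFO_isArc
  constructor
  · refine fun hgreedy => ⟨fun a b hab => ((hgreedy a b).1 hab).2.1, fun j t hbad heq => ?_⟩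
    obtain ⟨⟨b, htb⟩, hj, hne⟩ := h.badPair_iff.1 hbad
    exact hlifo.not_rel_left htb ((hgreedy j t).2 ⟨hj, heq, hne.symm⟩)
  · refine fun ⟨harc, hbad⟩ a t => ⟨fun hat => ⟨hlifo hat, harc a t hat, h.ne_of_isArc hat⟩,
      fun ⟨hgreatest, heq, hne⟩ => ?_⟩
    rcases h.coversAll_isArc t with ⟨c, hct⟩ | hopen
    · exact hgreatest.unique (hlifo hct) ▸ hct
    · exact absurd heq (hbad a t (h.badPair_iff.2 ⟨hopen, hgreatest, Ne.symm hne⟩))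

/-- The pairs of letters cancelling each other in the left-to-right reduction of the word with
labels `i` and exponents `w`. -/
noncomputable def stackPairing (w : Fin k → Bool) (i : Fin k → α) : Finset (Finset (Fin k)) :=
  relBlocks (Closes (letter w i))

lemma memANC2_stackPairing (hi : CoversAll (Closes (letter w i))) :
    MemANC2 w (stackPairing w i) :=
  (isGreedy_closes (letter w i)).isLIFO.memANC2_relBlocks hi
    fun _ _ hab => ((isGreedy_closes (letter w i) _ _).1 hab).2.2

lemma isArc_stackPairing : IsArc (stackPairing w i) = Closes (letter w i) :=
  isArc_relBlocks fun _ _ => Closes.lt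

lemma MemANC2.coversAll_and_stackPairing_eq_iff (h : MemANC2 w π) :
    CoversAll (Closes (letter w i)) ∧ stackPairing w i = π ↔ IsAdmissible w π i := by
  rw [← h.isGreedy_isArc_iff]
  constructor
  · rintro ⟨-, rfl⟩
    rw [isArc_stackPairing]
    exact isGreedy_closes _
  · intro hgreedy
    have heq : Closes (letter w i) = IsArc π := (isGreedy_closes _).unique hgreedy
    rw [stackPairing, heq]
    exact ⟨h.coversAll_isArc, h.relBlocks_isArc⟩

end Admissible

section Counting

lemma sum_prod_take {R α : Type*} [CommSemiring R] [Fintype α] {k : ℕ}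
    (W : ∀ t : Fin k, (Fin t → α) → α → R) (c : Fin k → R) (hW : ∀ t g, ∑ y, W t g y = c t) :
    ∑ f : Fin k → α, ∏ t, W t (Fin.take t t.isLt.le f) (f t) = ∏ t, c t := by
  induction k with
  | zero => simp
  | succ k ih =>
    rw [← (Fin.snocEquiv fun _ => α).sum_comp, Fintype.sum_prod_type_right, Fin.prod_univ_castSucc,
      ← ih (fun t => W t.castSucc) (fun t => c t.castSucc) fun t => hW t.castSucc,
      Finset.sum_mul]
    refine Finset.sum_congr rfl fun f _ => ?_
    rw [← hW (Fin.last k) f, Finset.mul_sum]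
    refine Finset.sum_congr rfl fun y _ => ?_
    have htake (t : Fin k) (ht : (t : ℕ) ≤ k + 1) :
        Fin.take t ht (Fin.snoc (α := fun _ => α) f y) = Fin.take t t.isLt.le f := by
      rw [← Fin.take_init t t.isLt.le, Fin.init_snoc]
    simp [Fin.prod_univ_castSucc, Fin.snocEquiv, htake]

open Classical in
lemma card_forall_mem_take {α : Type*} [Fintype α] {k : ℕ}
    (A : ∀ t : Fin k, (Fin t → α) → Finset α) (c : Fin k → ℕ) (hA : ∀ t g, (A t g).card = c t) :
    Finset.card {f : Fin k → α | ∀ t, f t ∈ A t (Fin.take t t.isLt.le f)} = ∏ t, c t := by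
  rw [← sum_prod_take (fun t g y => if y ∈ A t g then 1 else 0) c fun t g => by simp [hA],
    Finset.card_filter]
  refine Finset.sum_congr rfl fun f _ => ?_
  convert (Finset.prod_boole (s := Finset.univ)).symm
  simp

variable {α : Type*} [Fintype α] {k : ℕ} {w : Fin k → Bool} {π : Finset (Finset (Fin k))}

open Classical in
/-- The labels of the letter at `t` compatible with the labels `g` of the earlier letters. -/
noncomputable def labelChoices (w : Fin k → Bool) (π : Finset (Finset (Fin k))) (t : Fin k)
    (g : Fin t → α) : Finset α :=
  {y | (∀ s : Fin t, IsArc π (s.castLE t.isLt.le) t → g s = y) ∧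
    ∀ s : Fin t, BadPair w π (s.castLE t.isLt.le) t → g s ≠ y}

lemma isAdmissible_iff_forall_mem_labelChoices {i : Fin k → α} :
    IsAdmissible w π i ↔ ∀ t, i t ∈ labelChoices w π t (Fin.take t t.isLt.le i) := by
  simp only [labelChoices, Finset.mem_filter, Finset.mem_univ, true_and]
  constructor
  · exact fun h t => ⟨fun s => h.1 _ t, fun s => h.2 _ t⟩
  · exact fun h => ⟨fun a t hat => (h t).1 ⟨a, hat.1⟩ hat, fun j t hj => (h t).2 ⟨j, hj.lt⟩ hj⟩

open Classical in
lemma MemANC2.card_labelChoices (h : MemANC2 w π) (t : Fin k) (g : Fin t → α) :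
    (labelChoices w π t g).card = if ∃ a, IsArc π a t then 1 else
      Fintype.card α - if ∃ j, BadPair w π j t then 1 else 0 := by
  have hlifo := h.isLIFO_isArc
  split_ifs with hclose hbad
  · obtain ⟨a, hat⟩ := hclose
    refine Finset.card_eq_one.2 ⟨g ⟨a, hat.1⟩, Finset.ext fun y => ?_⟩
    have hnot (s : Fin t) : ¬ BadPair w π (s.castLE t.isLt.le) t := fun hs => by
      obtain ⟨⟨b, htb⟩, -⟩ := h.badPair_iff.1 hs
      exact hlifo.not_rel_left htb hat
    have harc (s : Fin t) : IsArc π (s.castLE t.isLt.le) t ↔ s = ⟨a, hat.1⟩ :=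
      ⟨fun hs => Fin.castLE_injective _ (hlifo.left_unique hs hat), fun hs => hs ▸ hat⟩
    simp [labelChoices, hnot, harc, eq_comm]
  · obtain ⟨j, hj⟩ := hbad
    have hbad (s : Fin t) : BadPair w π (s.castLE t.isLt.le) t ↔ s = ⟨j, hj.lt⟩ :=
      ⟨fun hs => Fin.castLE_injective _
        ((h.badPair_iff.1 hs).2.1.unique (h.badPair_iff.1 hj).2.1), fun hs => hs ▸ hj⟩
    have hcompl : labelChoices w π t g = {g ⟨j, hj.lt⟩}ᶜ := by
      ext y
      simp [labelChoices, not_exists.1 hclose, hbad, eq_comm]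
    rw [hcompl, Finset.card_compl, Finset.card_singleton]
  · simp [labelChoices, not_exists.1 hclose, not_exists.1 hbad]

open Classical in
lemma MemANC2.card_isAdmissible (h : MemANC2 w π) :
    Finset.card {i : Fin k → α | IsAdmissible w π i} =
      ∏ S ∈ π, (Fintype.card α - if BadBlock w π S then 1 else 0) := by
  simp only [isAdmissible_iff_forall_mem_labelChoices]
  rw [card_forall_mem_take _ _ h.card_labelChoices, h.1.prod_univ]
  refine Finset.prod_congr rfl fun S hS => ?_
  obtain ⟨a, b, hab, rfl⟩ := h.exists_isArc_of_mem hS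
  have ha : ¬ ∃ c, IsArc π c a := fun ⟨_, hca⟩ => h.isLIFO_isArc.not_rel_left hab hca
  have hb : ∃ c, IsArc π c b := ⟨a, hab⟩
  simp only [Finset.prod_pair hab.1.ne, if_neg ha, if_pos hb, mul_one, badBlock_pair_iff hab]

end Counting

open Classical in
theorem star_moment_pair_partition_formula_general (d : ℕ) {k : ℕ} (w : Fin k → Bool) :
    Mword d w = ∑ π ∈ ANC2 w, ∏ S ∈ π, (d - if BadBlock w π S then 1 else 0) := by
  have hclosed (i : Fin k → Fin d) : wprod w i = 1 ↔ CoversAll (Closes (letter w i)) := by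
    rw [wprod_eq_mk, mk_ofFn_eq_one_iff_coversAll]
  have hmaps : ∀ i ∈ ({i | wprod w i = 1} : Finset (Fin k → Fin d)),
      stackPairing w i ∈ ANC2 w := fun i hi => by
    rw [Finset.mem_filter_univ, hclosed] at hi
    exact (Finset.mem_filter_univ _).2 (memANC2_stackPairing hi)
  rw [Mword, Nat.card_eq_fintype_card, Fintype.card_subtype,
    Finset.card_eq_sum_card_fiberwise hmaps]
  refine Finset.sum_congr rfl fun π hπ => ?_
  have hπ : MemANC2 w π := (Finset.mem_filter_univ π).1 hπ
  simp only [Finset.filter_filter, hclosed, hπ.coversAll_and_stackPairing_eq_iff,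
    hπ.card_isAdmissible, Fintype.card_fin]

open Classical in
/-- The number of `w`-paths of a balanced word `w` satisfies
`M_d(w) = Σ_{π ∈ ANC₂(w)} ∏_{V ∈ π} (d - 1_{V ∈ B(π)})`. -/
theorem star_moment_pair_partition_formula (d p : ℕ) (hd : 2 ≤ d)
    (w : Fin (2 * p) → Bool) (hw : IsBalanced w) :
    Mword d w = ∑ π ∈ ANC2 w, ∏ S ∈ π, (d - if BadBlock w π S then 1 else 0) :=
  star_moment_pair_partition_formula_general d w
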